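/- (Triangular dependence on the counter term.) Let k ≥ 1, let β₁, …, β_{k+1} be populated multi-indices, let γ be a multi-index with [γ] ≥ 0, and set β := β₁ + ⋯ + β_{k+1}. If the k-fold composition matrix entry ((D^(0))^k)_{β_{k+1}}^γ ≠ 0, then β_i ≺ β for every i = 1, …, k, and γ ≺ β. -/

import Mathlib

open Finsupp

noncomputable section

/-- The index set `I`: symbols `z_k` for `k : ℕ` (left summand) and `z_n` for
`n ∈ ℕ² \ {(0,0)}` (right summand). -/
abbrev RSIdx : Type := ℕ ⊕ {n : ℕ × ℕ // n ≠ (0, 0)}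

/-- Multi-indices: finitely supported functions from the index set to `ℕ`. -/
abbrev MIdx : Type := RSIdx →₀ ℕ

/-- The unit multi-index `e_k`. -/
def eK (k : ℕ) : MIdx := Finsupp.single (Sum.inl k) 1

/-- The unit multi-index `e_n` for `n ≠ (0,0)`. -/
def eN (n : {n : ℕ × ℕ // n ≠ (0, 0)}) : MIdx := Finsupp.single (Sum.inr n) 1

/-- The scaled length `[β] = Σ_k k·β(k) − Σ_{n≠(0,0)} β(n)`. -/
def slen (β : MIdx) : ℤ :=
  β.sum fun i m =>
    match i with
    | Sum.inl k => (k : ℤ) * (m : ℤ)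
    | Sum.inr _ => -(m : ℤ)

/-- The parabolic length `|n| = n₁ + 2 n₂` of `n ∈ ℕ²`. -/
def plen (n : ℕ × ℕ) : ℕ := n.1 + 2 * n.2

/-- The polynomial part `|β|_p = Σ_{n≠(0,0)} |n|·β(n)`. -/
def polyPart (β : MIdx) : ℕ :=
  β.sum fun i m =>
    match i with
    | Sum.inl _ => 0
    | Sum.inr n => plen n.val * m

/-- The homogeneity `|β| = α(1+[β]) + |β|_p`. -/
def homog (α : ℝ) (β : MIdx) : ℝ := α * (1 + (slen β : ℝ)) + (polyPart β : ℝ)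

/-- `β` is purely polynomial iff `β = e_n` for some `n ≠ (0,0)`. -/
def PurelyPoly (β : MIdx) : Prop := ∃ n, β = eN n

/-- `β` is populated iff it is purely polynomial or `[β] ≥ 0`. -/
def Populated (β : MIdx) : Prop := PurelyPoly β ∨ 0 ≤ slen β

/-- The ordinal `|β|_≺ = [β] + (1/2)|β|_p + (1/4)β(0)`. -/
def precNorm (β : MIdx) : ℝ :=
  (slen β : ℝ) + (polyPart β : ℝ) / 2 + (β (Sum.inl 0) : ℝ) / 4

open Classical in
/-- The matrix entry `(D^(0))_β^γ` of the derivation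
`D^(0) = Σ_k (k+1) z_{k+1} ∂_{z_k}`: it is `(k+1)·γ(k)` if there exists `k` with
`γ + e_{k+1} = β + e_k` (such `k` is unique), and `0` otherwise. -/
def D0 (β γ : MIdx) : ℕ :=
  if h : ∃ k : ℕ, γ + eK (k + 1) = β + eK k then
    (h.choose + 1) * γ (Sum.inl h.choose)
  else 0

open Classical in
/-- The matrix entry of `D^(n)` for `n ∈ ℕ²`, where `D^((0,0))` means `D^(0)` and,
for `n ≠ (0,0)`, `(D^(n))_β^γ = β(n) + 1` if `γ = β + e_n`, and `0` otherwise. -/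
def DMat (n : ℕ × ℕ) : MIdx → MIdx → ℕ :=
  if hn : n = (0, 0) then D0
  else fun β γ =>
    if γ = β + eN ⟨n, hn⟩ then β (Sum.inr ⟨n, hn⟩) + 1 else 0

/-- Composition of two `ℕ`-valued matrices indexed by multi-indices; the sum over the
intermediate multi-index is well-defined (by row-finiteness) as a `finsum`. -/
def matMul (A B : MIdx → MIdx → ℕ) : MIdx → MIdx → ℕ :=
  fun β γ => ∑ᶠ δ : MIdx, A β δ * B δ γ

open Classical in
/-- The identity matrix. -/
def matId : MIdx → MIdx → ℕ := fun β γ => if γ = β then 1 else 0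

/-- Composition of a list of matrices. -/
def matProd : List (MIdx → MIdx → ℕ) → MIdx → MIdx → ℕ
  | [] => matId
  | A :: l => matMul A (matProd l)

/-- The `l`-fold matrix power of `D^(0)`. -/
def D0pow : ℕ → MIdx → MIdx → ℕ
  | 0 => matId
  | l + 1 => matMul D0 (D0pow l)

/-!
Put `W β := ∑ l, l·β(l)`. Since `|n| ≥ 1` for `n ≠ (0,0)`, one has `W β ≤ [β] + |β|_p`, hence
`([β] + W β)/2 ≤ |β|_≺`. As `[β] ≥ -1` for populated `β`, this gives `|βᵢ|_≺ ≥ -1/2`.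
A nonzero entry of `D^(0)` turns one factor `z_l` into `z_{l+1}`, which raises `W` by `1` and
`|·|_≺` by at least `3/4` (exactly `3/4` for `l = 0`, because of the term `β(0)/4`).
Thus `W β_{k+1} ≥ k ≥ 1`, so that `β_{k+1}` is not purely polynomial, `[β_{k+1}] ≥ 0` and
`|β_{k+1}|_≺ ≥ k/2`; this outweighs the at most `(k - 1)/2` lost to the `βⱼ` with `i ≠ j ≤ k`.
Likewise `|β_{k+1}|_≺ - |γ|_≺ ≥ 3k/4` outweighs the at most `k/2` lost to `β₁, …, β_k`.
-/

/-- The weight `W β = Σ_k k·β(k)`, i.e. the scaled length without the contribution of the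
polynomial symbols `z_n`. It bounds the number of factors `D^(0)` that can lead to `β`. -/
def zWeight (β : MIdx) : ℕ :=
  β.sum fun i m =>
    match i with
    | Sum.inl k => k * m
    | Sum.inr _ => 0

section Additivity

variable (β γ : MIdx)

theorem slen_add : slen (β + γ) = slen β + slen γ := by
  refine Finsupp.sum_add_index' ?_ ?_
  · rintro (_ | _) <;> simp
  · rintro (_ | _) _ _ <;> push_cast <;> ring

theorem polyPart_add : polyPart (β + γ) = polyPart β + polyPart γ := by
  refine Finsupp.sum_add_index' ?_ ?_
  · rintro (_ | _) <;> simp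
  · rintro (_ | _) _ _ <;> ring

theorem zWeight_add : zWeight (β + γ) = zWeight β + zWeight γ := by
  refine Finsupp.sum_add_index' ?_ ?_
  · rintro (_ | _) <;> simp
  · rintro (_ | _) _ _ <;> ring

theorem precNorm_add : precNorm (β + γ) = precNorm β + precNorm γ := by
  simp only [precNorm, slen_add, polyPart_add, Finsupp.add_apply]
  push_cast
  ring

theorem precNorm_sum {ι : Type*} (s : Finset ι) (f : ι → MIdx) :
    precNorm (∑ i ∈ s, f i) = ∑ i ∈ s, precNorm (f i) :=
  map_sum (AddMonoidHom.mk' precNorm precNorm_add) f s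

end Additivity

section UnitMultiIndices

variable (k : ℕ) (n : {n : ℕ × ℕ // n ≠ (0, 0)})

theorem slen_eK : slen (eK k) = k := by
  simp [slen, eK]

theorem slen_eN : slen (eN n) = -1 := by
  simp [slen, eN]

theorem polyPart_eK : polyPart (eK k) = 0 := by
  simp [polyPart, eK]

theorem zWeight_eK : zWeight (eK k) = k := by
  simp [zWeight, eK]

theorem zWeight_eN : zWeight (eN n) = 0 := by
  simp [zWeight, eN]

theorem precNorm_eK_add_le_precNorm_eK_succ :
    precNorm (eK k) + 3 / 4 ≤ precNorm (eK (k + 1)) := by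
  have hzero : (eK k (Sum.inl 0) : ℝ) ≤ 1 := by
    rw [eK, Finsupp.single_apply]
    split_ifs <;> simp
  have hsucc : eK (k + 1) (Sum.inl 0) = 0 := by simp [eK]
  simp only [precNorm, slen_eK, polyPart_eK, hsucc]
  push_cast
  linarith

end UnitMultiIndices

section LowerBounds

theorem one_le_plen {n : ℕ × ℕ} (hn : n ≠ (0, 0)) : 1 ≤ plen n := by
  rw [ne_eq, Prod.ext_iff] at hn
  unfold plen
  omega

theorem zWeight_le_slen_add_polyPart (β : MIdx) : (zWeight β : ℤ) ≤ slen β + polyPart β := by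
  simp only [zWeight, slen, polyPart, Finsupp.sum]
  push_cast
  rw [← Finset.sum_add_distrib]
  refine Finset.sum_le_sum fun i _ => ?_
  rcases i with k | n
  · simp
  · have hn : β (Sum.inr n) ≤ plen n.val * β (Sum.inr n) :=
      Nat.le_mul_of_pos_left _ (one_le_plen n.property)
    push_cast
    omega

theorem slen_add_zWeight_div_two_le_precNorm (β : MIdx) :
    ((slen β : ℝ) + zWeight β) / 2 ≤ precNorm β := by
  have hweight : (zWeight β : ℝ) ≤ slen β + polyPart β := by
    exact_mod_cast zWeight_le_slen_add_polyPart β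
  unfold precNorm
  linarith [Nat.cast_nonneg (α := ℝ) (β (Sum.inl 0))]

theorem Populated.neg_one_le_slen {β : MIdx} (h : Populated β) : -1 ≤ slen β := by
  rcases h with ⟨n, rfl⟩ | h
  · exact (slen_eN n).ge
  · omega

theorem Populated.slen_nonneg {β : MIdx} (h : Populated β) (hW : 0 < zWeight β) :
    0 ≤ slen β := by
  rcases h with ⟨n, rfl⟩ | h
  · exact absurd (zWeight_eN n) hW.ne'
  · exact h

theorem Populated.neg_half_le_precNorm {β : MIdx} (h : Populated β) :
    -(1 / 2) ≤ precNorm β := by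
  have hslen : (-1 : ℝ) ≤ slen β := by exact_mod_cast h.neg_one_le_slen
  linarith [slen_add_zWeight_div_two_le_precNorm β, Nat.cast_nonneg (α := ℝ) (zWeight β)]

theorem Populated.zWeight_div_two_le_precNorm {β : MIdx} (h : Populated β)
    (hW : 0 < zWeight β) : (zWeight β : ℝ) / 2 ≤ precNorm β := by
  have hslen : (0 : ℝ) ≤ slen β := by exact_mod_cast h.slen_nonneg hW
  linarith [slen_add_zWeight_div_two_le_precNorm β]

theorem neg_card_div_two_le_precNorm_sum {ι : Type*} {s : Finset ι} {f : ι → MIdx}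
    (hf : ∀ i ∈ s, Populated (f i)) : -(s.card / 2 : ℝ) ≤ precNorm (∑ i ∈ s, f i) := by
  have hsum := Finset.card_nsmul_le_sum s (fun i => precNorm (f i)) (-(1 / 2))
    fun i hi => (hf i hi).neg_half_le_precNorm
  rw [precNorm_sum]
  rw [nsmul_eq_mul] at hsum
  linarith

end LowerBounds

section Derivation

theorem exists_ne_zero_of_matMul_ne_zero {A B : MIdx → MIdx → ℕ} {β γ : MIdx}
    (h : matMul A B β γ ≠ 0) : ∃ δ, A β δ ≠ 0 ∧ B δ γ ≠ 0 := by
  by_contra! hAB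
  exact h <| finsum_eq_zero_of_forall_eq_zero fun δ =>
    mul_eq_zero.2 (or_iff_not_imp_left.2 (hAB δ))

theorem exists_add_eK_eq_of_D0_ne_zero {β γ : MIdx} (h : D0 β γ ≠ 0) :
    ∃ k, γ + eK (k + 1) = β + eK k := by
  by_contra hk
  exact h (dif_neg hk)

theorem zWeight_add_one_le_of_D0_ne_zero {β γ : MIdx} (h : D0 β γ ≠ 0) :
    zWeight γ + 1 ≤ zWeight β := by
  obtain ⟨k, hk⟩ := exists_add_eK_eq_of_D0_ne_zero h
  have hweight := congrArg zWeight hk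
  simp only [zWeight_add, zWeight_eK] at hweight
  omega

theorem precNorm_add_le_of_D0_ne_zero {β γ : MIdx} (h : D0 β γ ≠ 0) :
    precNorm γ + 3 / 4 ≤ precNorm β := by
  obtain ⟨k, hk⟩ := exists_add_eK_eq_of_D0_ne_zero h
  have hnorm := congrArg precNorm hk
  simp only [precNorm_add] at hnorm
  linarith [precNorm_eK_add_le_precNorm_eK_succ k]

theorem add_nsmul_le_of_D0pow_ne_zero {M : Type*} [AddMonoid M] [Preorder M] [AddRightMono M]
    {f : MIdx → M} {c : M} (hf : ∀ β γ, D0 β γ ≠ 0 → f γ + c ≤ f β) {k : ℕ} {β γ : MIdx}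
    (h : D0pow k β γ ≠ 0) : f γ + k • c ≤ f β := by
  induction k generalizing β with
  | zero =>
    obtain rfl : γ = β := not_not.1 (mt (fun hne => if_neg hne) h)
    simp
  | succ k ih =>
    obtain ⟨δ, hβδ, hδγ⟩ := exists_ne_zero_of_matMul_ne_zero h
    calc f γ + (k + 1) • c = f γ + k • c + c := by rw [succ_nsmul, add_assoc]
      _ ≤ f δ + c := by gcongr; exact ih hδγ
      _ ≤ f β := hf β δ hβδ

theorem le_zWeight_of_D0pow_ne_zero {k : ℕ} {β γ : MIdx} (h : D0pow k β γ ≠ 0) :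
    k ≤ zWeight β := by
  have hweight := add_nsmul_le_of_D0pow_ne_zero (fun _ _ => zWeight_add_one_le_of_D0_ne_zero) h
  rw [nsmul_one, Nat.cast_id] at hweight
  omega

theorem precNorm_add_mul_le_of_D0pow_ne_zero {k : ℕ} {β γ : MIdx} (h : D0pow k β γ ≠ 0) :
    precNorm γ + k * (3 / 4) ≤ precNorm β := by
  simpa only [nsmul_eq_mul] using
    add_nsmul_le_of_D0pow_ne_zero (fun _ _ => precNorm_add_le_of_D0_ne_zero) h

theorem Populated.div_two_le_precNorm_of_D0pow_ne_zero {k : ℕ} (hk : 1 ≤ k) {β γ : MIdx}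
    (hβ : Populated β) (h : D0pow k β γ ≠ 0) : (k : ℝ) / 2 ≤ precNorm β := by
  have hweight := le_zWeight_of_D0pow_ne_zero h
  calc (k : ℝ) / 2 ≤ zWeight β / 2 := by gcongr
    _ ≤ precNorm β := hβ.zWeight_div_two_le_precNorm (hk.trans hweight)

end Derivation

theorem statement14_general (k : ℕ) (hk : 1 ≤ k)
    (βs : Fin (k + 1) → MIdx) (hpop : ∀ i, Populated (βs i))
    (γ : MIdx) (h : D0pow k (βs (Fin.last k)) γ ≠ 0) :
    (∀ i : Fin k, precNorm (βs i.castSucc) < precNorm (∑ j, βs j))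
    ∧ precNorm γ < precNorm (∑ j, βs j) := by
  have hk' : (1 : ℝ) ≤ k := by exact_mod_cast hk
  rw [Fin.sum_univ_castSucc, precNorm_add]
  constructor
  · intro i
    have hlast := (hpop (Fin.last k)).div_two_le_precNorm_of_D0pow_ne_zero hk h
    have hothers := neg_card_div_two_le_precNorm_sum (s := Finset.univ.erase i)
      fun j _ => hpop j.castSucc
    rw [Finset.card_erase_of_mem (Finset.mem_univ i), Finset.card_fin, Nat.cast_pred hk]
      at hothers
    rw [← Finset.add_sum_erase _ _ (Finset.mem_univ i), precNorm_add]
    linarith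
  · have hlast := precNorm_add_mul_le_of_D0pow_ne_zero h
    have hothers := neg_card_div_two_le_precNorm_sum (s := Finset.univ)
      fun j _ => hpop (Fin.castSucc j)
    rw [Finset.card_fin] at hothers
    linarith

/-- Triangular dependence on the counter term: with `k ≥ 1`, populated
`β₁, …, β_{k+1}`, `γ` with `[γ] ≥ 0` and `β = β₁ + ⋯ + β_{k+1}`, if
`((D^(0))^k)_{β_{k+1}}^γ ≠ 0` then `βᵢ ≺ β` for `i = 1, …, k`, and `γ ≺ β`. -/
theorem statement14 (k : ℕ) (hk : 1 ≤ k)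
    (βs : Fin (k + 1) → MIdx) (hpop : ∀ i, Populated (βs i))
    (γ : MIdx) (hγ : 0 ≤ slen γ)
    (h : D0pow k (βs (Fin.last k)) γ ≠ 0) :
    (∀ i : Fin k, precNorm (βs i.castSucc) < precNorm (∑ j, βs j))
    ∧ precNorm γ < precNorm (∑ j, βs j) :=
  statement14_general k hk βs hpop γ h
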